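/- arXiv:2405.10152 — 2 statements merged into one kernel-verified Lean document; each statement's English description precedes it below -/
import Mathlib

section
/- In an extensional BC±I-algebra, the braid is natural on elements of arity 1 → 1: if a has arity 1 → 1, then a ∘ C⁺ = C⁺ ∘ (B a) and a ∘ C⁻ = C⁻ ∘ (B a). -/
namespace Paper

/-- An applicative structure with distinguished elements `B`, `C⁺`, `C⁻`, `I`. -/
structure BCStruct (α : Type*) where
  ap : α → α → α
  B : α
  Cp : α
  Cm : α
  I : α

namespace BCStruct

variable {α : Type*}

/-- `a ∘ b := B a b`. -/
def comp (S : BCStruct α) (a b : α) : α := S.ap (S.ap S.B a) b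

/-- Powers: `a⁰ = I`, `a^(n+1) = a ∘ aⁿ`. -/
def pow (S : BCStruct α) (a : α) : ℕ → α
  | 0 => S.I
  | n + 1 => S.comp a (S.pow a n)

/-- `a• := C⁺ I a`. -/
def bul (S : BCStruct α) (a : α) : α := S.ap (S.ap S.Cp S.I) a

/-- `a` has arity `m → n` iff `(C⁺ B a) ∘ Bᵐ = (B a) ∘ Bⁿ`. -/
def hasArity (S : BCStruct α) (a : α) (m n : ℕ) : Prop :=
  S.comp (S.ap (S.ap S.Cp S.B) a) (S.pow S.B m) = S.comp (S.ap S.B a) (S.pow S.B n)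

/-- The axioms of an extensional BC±I-algebra. -/
structure IsExt (S : BCStruct α) : Prop where
  hB : ∀ a b c, S.ap (S.ap (S.ap S.B a) b) c = S.ap a (S.ap b c)
  hCp : ∀ a b c, S.ap (S.ap (S.ap S.Cp a) b) c = S.ap (S.ap a c) b
  hCm : ∀ a b c, S.ap (S.ap (S.ap S.Cm a) b) c = S.ap (S.ap a c) b
  hI : ∀ a, S.ap S.I a = a
  hC2 : ∀ a b, S.ap (S.ap S.Cp a) b = S.ap (S.ap S.Cm a) b
  hLam : S.ap S.B S.I = S.I
  hRho : S.ap (S.ap S.Cp S.B) S.I = S.ap S.B S.I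
  hAlpha : S.comp (S.ap (S.ap S.Cp S.B) S.B) (S.comp S.B S.B) = S.comp (S.ap S.B S.B) S.B
  hCox1p : S.comp S.Cp S.Cm = S.ap S.B (S.ap S.B S.I)
  hCox1m : S.comp S.Cm S.Cp = S.ap S.B (S.ap S.B S.I)
  hCox2p : S.comp (S.ap (S.ap S.Cp S.B) S.Cp) (S.comp S.B S.B)
      = S.comp (S.ap S.B S.Cp) (S.comp S.B S.B)
  hCox2m : S.comp (S.ap (S.ap S.Cp S.B) S.Cm) (S.comp S.B S.B)
      = S.comp (S.ap S.B S.Cm) (S.comp S.B S.B)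
  hCox3p : S.comp (S.ap S.B S.Cp) (S.comp S.Cp (S.ap S.B S.Cp))
      = S.comp S.Cp (S.comp (S.ap S.B S.Cp) S.Cp)
  hCox3m : S.comp (S.ap S.B S.Cm) (S.comp S.Cm (S.ap S.B S.Cm))
      = S.comp S.Cm (S.comp (S.ap S.B S.Cm) S.Cm)
  hBCp : S.comp (S.ap S.B S.B) S.Cp = S.comp S.Cp (S.comp (S.ap S.B S.Cp) S.B)
  hBCm : S.comp (S.ap S.B S.B) S.Cm = S.comp S.Cm (S.comp (S.ap S.B S.Cm) S.B)

/-- The axioms for twists `θ⁺ = tp`, `θ⁻ = tm` making the algebra balanced. -/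
structure IsBalanced (S : BCStruct α) (tp tm : α) : Prop where
  arP : S.comp (S.ap S.B tp) S.B = S.comp (S.ap (S.ap S.Cp S.B) tp) S.B
  arM : S.comp (S.ap S.B tm) S.B = S.comp (S.ap (S.ap S.Cp S.B) tm) S.B
  invPM : S.comp tp tm = S.ap S.B S.I
  invMP : S.comp tm tp = S.ap S.B S.I
  natBulP : ∀ a, S.ap (S.ap S.Cp tp) a = S.ap (S.ap S.Cp S.I) a
  natBulM : ∀ a, S.ap (S.ap S.Cp tm) a = S.ap (S.ap S.Cp S.I) a
  natBP : S.comp S.B tp = S.comp tp (S.comp S.Cp (S.comp tp (S.comp S.Cp S.B)))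
  natBM : S.comp S.B tm = S.comp tm (S.comp S.Cm (S.comp tm (S.comp S.Cm S.B)))

/-- The axioms for a trace combinator `Tr` (Left/Right Tightening, Yanking, Exchange). -/
structure IsTrace (S : BCStruct α) (tp tm Tr : α) : Prop where
  leftT : S.comp (S.ap (S.ap S.Cp S.B) Tr) S.B = S.comp (S.ap S.B Tr) (S.pow S.B 2)
  rightT : S.comp (S.ap S.B Tr) (S.comp (S.ap (S.ap S.Cp S.B) S.B) S.B) = S.comp S.B Tr
  yankP : S.ap Tr S.Cp = tp
  yankM : S.ap Tr S.Cm = tm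
  exch : S.comp (S.comp (S.comp Tr Tr) (S.ap (S.ap S.Cp S.B) S.Cm)) (S.ap S.B S.Cp)
      = S.comp Tr Tr

/-- A duality: `α• ∘ B = (B α) ∘ B²`, `β• ∘ B³ = B β`, `α ∘ (B β) = B I`,
`(B α) ∘ β = B I`. -/
structure IsDuality (S : BCStruct α) (al be : α) : Prop where
  arAl : S.comp (S.bul al) S.B = S.comp (S.ap S.B al) (S.pow S.B 2)
  arBe : S.comp (S.bul be) (S.pow S.B 3) = S.ap S.B be
  d1 : S.comp al (S.ap S.B be) = S.ap S.B S.I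
  d2 : S.comp (S.ap S.B al) be = S.ap S.B S.I

/-- A ribbon structure: a duality compatible with the twists. -/
structure IsRibbon (S : BCStruct α) (tp tm al be : α) : Prop where
  dual : IsDuality S al be
  dTp : S.comp al tp = S.comp al (S.ap S.B tp)
  dTm : S.comp al tm = S.comp al (S.ap S.B tm)

end BCStruct

end Paper

/-!
Under `∘` an extensional BC±I-algebra is a monoid on which `x ↦ B x` is an endomorphism `φ`, and the
axioms on `B` and `C⁺` turn into exchange laws with `φ`; for instance `C⁺ x y = y• ∘ x` and
`y• ∘ φ x = x ∘ y•`. Arity `1 → 1` of `a` becomes `a• ∘ B ∘ B = φ a ∘ B`. The map `φ` can be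
undone: `x = I• ∘ φ x ∘ C⁺ ∘ φ B`. Applying this to `x = a ∘ C⁺`, one slides the braid past `B`,
replaces `φ a ∘ B` by `a• ∘ B ∘ B`, slides the braid past both `B`s and contracts again; the outcome
is the same formula for `x = C⁺ ∘ φ a`. Exchanging `C⁺` and `C⁻` gives the other half.
-/

namespace Paper

/-- The relations between the combinators in terms of the monoid structure given by `∘`: `φ x`
stands for `B x`, `b` for `B`, `bul y` for `y•` and `c` for one of the braids `C⁺`, `C⁻`. -/
structure IsBraidedShift {M : Type*} [Monoid M] (φ : M →* M) (b : M) (bul : M → M) (c : M) :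
    Prop where
  mul_shift : ∀ x, b * φ x = φ (φ x) * b
  braid_mul_shift_shift : ∀ x, c * φ (φ x) = φ (φ x) * c
  mul_braid : b * c = φ c * (c * φ b)
  bul_mul_shift : ∀ y x, bul y * φ x = x * bul y
  shift_bul : ∀ y, φ (bul y) = bul y * c
  bul_one_mul : bul 1 * b = 1

namespace IsBraidedShift

variable {M : Type*} [Monoid M] {φ : M →* M} {b c : M} {bul : M → M}

theorem bul_one_mul_braid_mul_shift (h : IsBraidedShift φ b bul c) :
    bul 1 * (c * φ b) = 1 := by
  rw [← mul_assoc, ← h.shift_bul, ← map_mul, h.bul_one_mul, map_one]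

theorem bul_one_mul_shift_mul_braid (h : IsBraidedShift φ b bul c) (x : M) :
    bul 1 * (φ x * (c * φ b)) = x := by
  rw [← mul_assoc, h.bul_mul_shift, mul_assoc, h.bul_one_mul_braid_mul_shift, mul_one]

theorem mul_mul_braid (h : IsBraidedShift φ b bul c) :
    b * b * c = φ (φ c) * (φ c * (c * φ (b * b))) := by
  calc b * b * c = b * φ c * (c * φ b) := by rw [mul_assoc, h.mul_braid, mul_assoc]
    _ = φ (φ c) * (b * c * φ b) := by rw [h.mul_shift]; simp only [mul_assoc]
    _ = φ (φ c) * (φ c * (c * φ (b * b))) := by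
      rw [h.mul_braid, map_mul]; simp only [mul_assoc]

theorem bul_mul_mul_mul_braid (h : IsBraidedShift φ b bul c) (y : M) :
    bul y * (b * b) * c = φ c * (c * φ (bul y * (b * b))) := by
  calc bul y * (b * b) * c = bul y * φ (φ c) * (φ c * (c * φ (b * b))) := by
        rw [mul_assoc, h.mul_mul_braid, mul_assoc]
    _ = φ c * (bul y * φ c * (c * φ (b * b))) := by rw [h.bul_mul_shift]; simp only [mul_assoc]
    _ = φ c * (c * (bul y * c * φ (b * b))) := by rw [h.bul_mul_shift]; simp only [mul_assoc]
    _ = φ c * (c * φ (bul y * (b * b))) := by rw [← h.shift_bul, ← map_mul]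

theorem mul_braid_of_bul_mul (h : IsBraidedShift φ b bul c) {a : M}
    (ha : bul a * (b * b) = φ a * b) : a * c = c * φ a := by
  have key : φ (a * c) * (c * φ b) = φ (c * φ a) * (c * φ b) :=
    calc φ (a * c) * (c * φ b) = φ a * b * c := by
          rw [map_mul, mul_assoc, ← h.mul_braid, mul_assoc]
      _ = φ c * (c * φ (φ a * b)) := by rw [← ha, h.bul_mul_mul_mul_braid]
      _ = φ c * (c * φ (φ a) * φ b) := by rw [map_mul, mul_assoc]
      _ = φ (c * φ a) * (c * φ b) := by
        rw [h.braid_mul_shift_shift, map_mul]; simp only [mul_assoc]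
  rw [← h.bul_one_mul_shift_mul_braid (a * c), key, h.bul_one_mul_shift_mul_braid]

end IsBraidedShift

namespace BCStruct

variable {α : Type*} {S : BCStruct α}

/-- The applicative structure with the two braids `C⁺` and `C⁻` exchanged. It is used to deduce
statements about `C⁻` from those about `C⁺`. -/
def signSwap (S : BCStruct α) : BCStruct α where
  ap := S.ap
  B := S.B
  Cp := S.Cm
  Cm := S.Cp
  I := S.I

namespace IsExt

theorem signSwap (hS : S.IsExt) : S.signSwap.IsExt where
  hB := hS.hB
  hCp := hS.hCm
  hCm := hS.hCp
  hI := hS.hI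
  hC2 x y := (hS.hC2 x y).symm
  hLam := hS.hLam
  hRho := (hS.hC2 _ _).symm.trans hS.hRho
  hAlpha := (congrArg (S.comp · _) (hS.hC2 _ _).symm).trans hS.hAlpha
  hCox1p := hS.hCox1m
  hCox1m := hS.hCox1p
  hCox2p := (congrArg (S.comp · _) (hS.hC2 _ _).symm).trans hS.hCox2m
  hCox2m := (congrArg (S.comp · _) (hS.hC2 _ _).symm).trans hS.hCox2p
  hCox3p := hS.hCox3m
  hCox3m := hS.hCox3p
  hBCp := hS.hBCm
  hBCm := hS.hBCp

theorem hasArity_signSwap (hS : S.IsExt) {a : α} {m n : ℕ} :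
    S.signSwap.hasArity a m n ↔ S.hasArity a m n := by
  have pow_signSwap (x : α) (k : ℕ) : S.signSwap.pow x k = S.pow x k := by
    induction k with
    | zero => rfl
    | succ k ih => exact congrArg (S.comp x) ih
  unfold hasArity
  rw [pow_signSwap, pow_signSwap, hS.hC2]
  rfl

theorem comp_ap (hS : S.IsExt) (x y z : α) : S.ap (S.comp x y) z = S.ap x (S.ap y z) :=
  hS.hB x y z

theorem I_comp (hS : S.IsExt) (x : α) : S.comp S.I x = x := by
  rw [comp, hS.hLam, hS.hI]

theorem comp_I (hS : S.IsExt) (x : α) : S.comp x S.I = x := by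
  rw [comp, ← hS.hCp, hS.hRho, hS.hLam, hS.hI]

theorem comp_Cp_B_ap (hS : S.IsExt) (x y z : α) :
    S.ap (S.comp (S.ap (S.ap S.Cp S.B) x) y) z = S.comp (S.ap y z) x := by
  rw [hS.comp_ap, hS.hCp, comp]

theorem B_comp_shift (hS : S.IsExt) (x : α) :
    S.comp S.B (S.ap S.B x) = S.comp (S.ap S.B (S.ap S.B x)) S.B := by
  rw [← hS.comp_ap, ← hS.comp_Cp_B_ap, hS.hAlpha, hS.comp_ap, comp]

theorem Cp_comp_shift_shift (hS : S.IsExt) (x : α) :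
    S.comp S.Cp (S.ap S.B (S.ap S.B x)) = S.comp (S.ap S.B (S.ap S.B x)) S.Cp := by
  rw [← hS.comp_ap, ← hS.comp_Cp_B_ap, hS.hCox2p]
  simp only [hS.comp_ap]
  rfl

theorem shift_comp (hS : S.IsExt) (x y : α) :
    S.ap S.B (S.comp x y) = S.comp (S.ap S.B x) (S.ap S.B y) := by
  rw [comp, ← hS.comp_ap, hS.B_comp_shift, hS.comp_ap, comp]

theorem comp_assoc (hS : S.IsExt) (x y z : α) :
    S.comp (S.comp x y) z = S.comp x (S.comp y z) := by
  rw [comp, hS.shift_comp, hS.comp_ap, comp, comp]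

/-- The monoid of elements of an extensional BC±I-algebra under `∘`. -/
abbrev monoid (hS : S.IsExt) : Monoid α where
  mul := S.comp
  one := S.I
  mul_assoc := hS.comp_assoc
  one_mul := hS.I_comp
  mul_one := hS.comp_I

/-- Application of `B`, which is an endomorphism of the monoid of elements under `∘`. -/
def shift (hS : S.IsExt) : @MonoidHom α α hS.monoid.toMulOne hS.monoid.toMulOne :=
  letI := hS.monoid
  { toFun := S.ap S.B, map_one' := hS.hLam, map_mul' := hS.shift_comp }

theorem Cp_comp_Cm (hS : S.IsExt) : S.comp S.Cp S.Cm = S.I := by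
  rw [hS.hCox1p, hS.hLam, hS.hLam]

theorem Cm_comp_Cp (hS : S.IsExt) : S.comp S.Cm S.Cp = S.I :=
  hS.signSwap.Cp_comp_Cm

theorem B_comp_Cp (hS : S.IsExt) :
    S.comp S.B S.Cp = S.comp (S.ap S.B S.Cp) (S.comp S.Cp (S.ap S.B S.B)) := by
  have cancel_Cp (x : α) : S.comp S.Cp (S.comp S.Cm x) = x := by
    rw [← hS.comp_assoc, hS.Cp_comp_Cm, hS.I_comp]
  have cancel_shift_Cp (x : α) : S.comp (S.ap S.B S.Cp) (S.comp (S.ap S.B S.Cm) x) = x := by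
    rw [← hS.comp_assoc, ← hS.shift_comp, hS.Cp_comp_Cm, hS.hLam, hS.I_comp]
  calc S.comp S.B S.Cp
      = S.comp (S.ap S.B S.Cp) (S.comp S.Cp
          (S.comp (S.comp S.Cm (S.comp (S.ap S.B S.Cm) S.B)) S.Cp)) := by
        simp only [hS.comp_assoc, cancel_Cp, cancel_shift_Cp]
    _ = S.comp (S.ap S.B S.Cp) (S.comp S.Cp (S.ap S.B S.B)) := by
        rw [← hS.hBCm, hS.comp_assoc, hS.Cm_comp_Cp, hS.comp_I]

theorem shift_ap_Cp (hS : S.IsExt) (x y : α) :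
    S.ap S.B (S.ap (S.ap S.Cp x) y) = S.ap (S.ap S.Cp (S.comp S.Cp (S.ap S.B x))) y := by
  calc S.ap S.B (S.ap (S.ap S.Cp x) y)
      = S.ap (S.ap (S.comp (S.ap S.B S.B) S.Cp) x) y := by rw [hS.comp_ap, hS.hB]
    _ = S.ap (S.ap S.Cp (S.comp S.Cp (S.ap S.B x))) y := by
        rw [hS.hBCp, hS.comp_ap, hS.comp_ap, comp]

theorem ap_Cp (hS : S.IsExt) (x y : α) : S.ap (S.ap S.Cp x) y = S.comp (S.bul y) x := by
  rw [bul, comp, hS.shift_ap_Cp, hS.hLam, hS.comp_I, hS.hCp]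

theorem bul_comp_shift (hS : S.IsExt) (y x : α) :
    S.comp (S.bul y) (S.ap S.B x) = S.comp x (S.bul y) := by
  calc S.comp (S.bul y) (S.ap S.B x)
      = S.ap (S.ap (S.comp S.Cp (S.ap S.B (S.ap S.B x))) S.I) y := by
        rw [hS.comp_ap, ← comp, hS.comp_I, hS.ap_Cp]
    _ = S.ap (S.ap (S.comp (S.ap S.B (S.ap S.B x)) S.Cp) S.I) y := by
        rw [hS.Cp_comp_shift_shift]
    _ = S.comp x (S.bul y) := by rw [hS.comp_ap, hS.hB, bul, comp]

theorem shift_bul (hS : S.IsExt) (y : α) :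
    S.ap S.B (S.bul y) = S.comp (S.bul y) S.Cp := by
  rw [bul, hS.shift_ap_Cp, hS.hLam, hS.comp_I, hS.ap_Cp, bul]

theorem bul_I_comp_B (hS : S.IsExt) : S.comp (S.bul S.I) S.B = S.I := by
  rw [← hS.ap_Cp, hS.hRho, hS.hLam]

theorem isBraidedShift (hS : S.IsExt) :
    @IsBraidedShift α hS.monoid hS.shift S.B S.bul S.Cp :=
  letI := hS.monoid
  { mul_shift := hS.B_comp_shift
    braid_mul_shift_shift := hS.Cp_comp_shift_shift
    mul_braid := hS.B_comp_Cp
    bul_mul_shift := hS.bul_comp_shift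
    shift_bul := hS.shift_bul
    bul_one_mul := hS.bul_I_comp_B }

theorem hasArity_one_one_iff (hS : S.IsExt) {a : α} :
    S.hasArity a 1 1 ↔ S.comp (S.bul a) (S.comp S.B S.B) = S.comp (S.ap S.B a) S.B := by
  simp only [hasArity, pow, hS.comp_I, hS.ap_Cp, hS.comp_assoc]

theorem comp_Cp_of_hasArity_one_one (hS : S.IsExt) {a : α} (h : S.hasArity a 1 1) :
    S.comp a S.Cp = S.comp S.Cp (S.ap S.B a) :=
  letI := hS.monoid
  hS.isBraidedShift.mul_braid_of_bul_mul (hS.hasArity_one_one_iff.1 h)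

end IsExt

end BCStruct

end Paper

/-- The braid is natural on elements of arity `1 → 1`. -/
theorem stmt_12 {α : Type*} (S : Paper.BCStruct α) (hS : S.IsExt)
    {a : α} (h : S.hasArity a 1 1) :
    S.comp a S.Cp = S.comp S.Cp (S.ap S.B a) ∧
    S.comp a S.Cm = S.comp S.Cm (S.ap S.B a) :=
  ⟨hS.comp_Cp_of_hasArity_one_one h,
    hS.signSwap.comp_Cp_of_hasArity_one_one (hS.hasArity_signSwap.2 h)⟩
end

section
/- A balanced extensional BC±I-algebra is traced if and only if it is ribbon: it admits an element Tr satisfying the Left Tightening, Right Tightening, Yanking, and Exchange axioms if and only if it admits elements α, β satisfying α• ∘ B = (B α) ∘ B², β• ∘ B³ = B β, α ∘ (B β) = B I, (B α) ∘ β = B I, α ∘ θ⁺ = α ∘ (B θ⁺), and α ∘ θ⁻ = α ∘ (B θ⁻), where a• := C⁺ I a. -/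
/-!
Read elements as string diagrams: composition is a monoid law, the shift `σ a = B a` adds a strand
on the left, and `C⁺`, `C⁻` are the two crossings, natural with respect to every diagram that has
an arity.

A duality `(α, β)` closes the first strand of a diagram by the cap `α` and the cup
`C⁺ ∘ θ⁺ ∘ β`; sliding caps and cups past one another yields the trace axioms. Conversely a trace
gives the pairing `β = tr (x ∘ y)`. Composition has an adjoint for this pairing, which makes the
pairing nondegenerate and provides the inverse copairing `α`.

The twist axioms amount to the balance `θ ∘ β = B θ ∘ β`. A full twist of two strands is absorbed
by a diagram without outputs, so the balance holds as soon as `C⁺ ∘ θ⁺ ∘ β = C⁻ ∘ θ⁻ ∘ β`, and for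
a trace both sides equal `Tr β`.
-/

namespace BCAlgebra

open Paper

section Semigroup

variable {G : Type*} [Semigroup G]

theorem reassoc {a b c : G} (h : a * b = c) (z : G) : a * (b * z) = c * z := by
  rw [← mul_assoc, h]

theorem reassoc₃ {a b c d : G} (h : a * (b * c) = d) (z : G) : a * (b * (c * z)) = d * z := by
  rw [← h, mul_assoc, mul_assoc]

theorem full_twist_of_braid {a b : G} (h : b * (a * b) = a * (b * a)) :
    a * (a * (b * (a * (a * b)))) = b * (b * (a * (b * (b * a)))) :=
  calc a * (a * (b * (a * (a * b)))) = a * (a * (b * a)) * (a * b) := by simp only [mul_assoc]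
    _ = a * (b * (a * b)) * (a * b) := by rw [h]
    _ = a * (b * a) * (b * (a * b)) := by simp only [mul_assoc]
    _ = b * (a * b) * (a * (b * a)) := by rw [h]
    _ = b * (a * (b * a)) * (b * a) := by simp only [mul_assoc]
    _ = b * (b * (a * b)) * (b * a) := by rw [h]
    _ = b * (b * (a * (b * (b * a)))) := by simp only [mul_assoc]

end Semigroup

/-- An extensional BC±I-algebra, bundled on its carrier. -/
class ExtAlgebra (M : Type*) extends BCStruct M where
  isExt : toBCStruct.IsExt

variable {M : Type*}

/-- Application. -/
def ap [ExtAlgebra M] (a b : M) : M := ExtAlgebra.toBCStruct.ap a b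

local notation:75 a:75 " ⬝ " b:76 => ap a b

/-- The combinator `B`; composed with a diagram it merges strands. -/
def B [ExtAlgebra M] : M := ExtAlgebra.toBCStruct.B

/-- The two crossings of the first two strands: `crossing true = C⁺` and `crossing false = C⁻`. -/
def crossing [ExtAlgebra M] : Bool → M
  | true => ExtAlgebra.toBCStruct.Cp
  | false => ExtAlgebra.toBCStruct.Cm

local notation "χ" => crossing

section Monoid

variable [ExtAlgebra M]

theorem crossing_ap_ap_ap (s : Bool) (a b x : M) : χ s ⬝ a ⬝ b ⬝ x = a ⬝ x ⬝ b := by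
  cases s
  · exact ExtAlgebra.isExt.hCm a b x
  · exact ExtAlgebra.isExt.hCp a b x

theorem crossing_ap_ap_eq (s s' : Bool) (a b : M) : χ s ⬝ a ⬝ b = χ s' ⬝ a ⬝ b := by
  cases s <;> cases s'
  · rfl
  · exact (ExtAlgebra.isExt.hC2 a b).symm
  · exact ExtAlgebra.isExt.hC2 a b
  · rfl

theorem crossing_B_ap_ap (s : Bool) (x y : M) : χ s ⬝ B ⬝ x ⬝ y = B ⬝ y ⬝ x :=
  crossing_ap_ap_ap s B x y

theorem comp_ap (a b x : M) : B ⬝ a ⬝ b ⬝ x = a ⬝ (b ⬝ x) :=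
  ExtAlgebra.isExt.hB a b x

theorem B_ap_comp (a b : M) : B ⬝ (B ⬝ a ⬝ b) = B ⬝ (B ⬝ a) ⬝ (B ⬝ b) := by
  have h : B ⬝ (χ true ⬝ B ⬝ B) ⬝ (B ⬝ B ⬝ B) ⬝ a ⬝ b = B ⬝ (B ⬝ B) ⬝ B ⬝ a ⬝ b :=
    congrArg (fun z : M => z ⬝ a ⬝ b) ExtAlgebra.isExt.hAlpha
  simpa only [comp_ap, crossing_B_ap_ap] using h.symm

/-- Diagrams form a monoid under composition `a * b = a ∘ b`. -/
instance : Monoid M where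
  mul a b := B ⬝ a ⬝ b
  one := ExtAlgebra.toBCStruct.I
  mul_assoc a b c :=
    calc B ⬝ (B ⬝ a ⬝ b) ⬝ c = B ⬝ (B ⬝ a) ⬝ (B ⬝ b) ⬝ c := by rw [B_ap_comp]
      _ = B ⬝ a ⬝ (B ⬝ b ⬝ c) := comp_ap _ _ _
  one_mul a := by
    have hI : B ⬝ ExtAlgebra.toBCStruct.I = (ExtAlgebra.toBCStruct.I : M) := ExtAlgebra.isExt.hLam
    exact (congrArg (· ⬝ a) hI).trans (ExtAlgebra.isExt.hI a)
  mul_one a := by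
    have hI : χ true ⬝ B ⬝ ExtAlgebra.toBCStruct.I ⬝ a = B ⬝ ExtAlgebra.toBCStruct.I ⬝ a :=
      congrArg (· ⬝ a) ExtAlgebra.isExt.hRho
    rw [crossing_B_ap_ap] at hI
    refine hI.trans ((congrArg (· ⬝ a) ExtAlgebra.isExt.hLam).trans (ExtAlgebra.isExt.hI a))

theorem mul_ap (a b x : M) : (a * b) ⬝ x = a ⬝ (b ⬝ x) := comp_ap a b x

theorem one_ap (a : M) : (1 : M) ⬝ a = a := ExtAlgebra.isExt.hI a

/-- The shift `a ↦ B a`, which adds a strand to the left of a diagram. -/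
def shift : M →* M where
  toFun a := B ⬝ a
  map_one' := ExtAlgebra.isExt.hLam
  map_mul' := B_ap_comp

end Monoid

local notation "σ" => shift

section Combinators

variable [ExtAlgebra M]

theorem shift_ap (a b : M) : σ a ⬝ b = a * b := rfl

theorem shift_injective : Function.Injective (σ : M → M) := fun a b h => by
  rw [← mul_one a, ← shift_ap, h, shift_ap, mul_one]

/-! ### Crossings -/

theorem crossing_mul_crossing_not (s : Bool) : χ s * χ (!s) = (1 : M) := by
  have hI : B ⬝ (B ⬝ ExtAlgebra.toBCStruct.I) = (ExtAlgebra.toBCStruct.I : M) :=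
    (congrArg (B ⬝ ·) ExtAlgebra.isExt.hLam).trans ExtAlgebra.isExt.hLam
  cases s
  · exact ExtAlgebra.isExt.hCox1m.trans hI
  · exact ExtAlgebra.isExt.hCox1p.trans hI

theorem crossing_not_mul_crossing (s : Bool) : χ (!s) * χ s = (1 : M) := by
  simpa only [Bool.not_not] using crossing_mul_crossing_not (M := M) (!s)

theorem crossing_false_mul_crossing_true : χ false * χ true = (1 : M) :=
  crossing_mul_crossing_not false

theorem crossing_true_mul_crossing_false : χ true * χ false = (1 : M) :=
  crossing_mul_crossing_not true

theorem crossing_ap_injective (s : Bool) : Function.Injective (χ s ⬝ · : M → M) :=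
  Function.LeftInverse.injective (g := (χ (!s) ⬝ ·)) fun a => by
    simp only [← mul_ap, crossing_not_mul_crossing, one_ap]

theorem shift_B_mul_crossing (s : Bool) : σ B * χ s = χ s * (σ (χ s) * (B : M)) := by
  cases s
  · exact ExtAlgebra.isExt.hBCm
  · exact ExtAlgebra.isExt.hBCp

theorem B_mul_crossing (s : Bool) : B * χ s = σ (χ s) * (χ s * σ (B : M)) := by
  have h := congrArg (fun z => σ (χ s) * (χ s * (z * χ s))) (shift_B_mul_crossing (M := M) (!s))
  simp only [mul_assoc, crossing_not_mul_crossing, mul_one,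
    reassoc (crossing_mul_crossing_not (M := M) s), one_mul] at h
  rw [h, ← mul_assoc (σ _) (σ _), ← map_mul, crossing_mul_crossing_not, map_one, one_mul]

theorem shift_shift_mul_crossing (s : Bool) (x : M) : σ (σ x) * χ s = χ s * σ (σ x) := by
  have h : (χ true ⬝ B ⬝ χ s) * (B * B) = σ (χ s) * (B * B : M) := by
    cases s
    · exact ExtAlgebra.isExt.hCox2m
    · exact ExtAlgebra.isExt.hCox2p
  have hx := congrArg (· ⬝ x) h
  simp only [mul_ap, crossing_B_ap_ap] at hx
  exact hx

theorem crossing_braid (s : Bool) : σ (χ s) * (χ s * σ (χ s)) = χ s * (σ (χ s) * (χ s : M)) := by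
  cases s
  · exact ExtAlgebra.isExt.hCox3m
  · exact ExtAlgebra.isExt.hCox3p

theorem shift_crossing_mul_crossing_mul_B :
    σ (χ true) * (χ false * B) = χ false * (σ (χ false) * (σ B * χ true) : M) :=
  calc σ (χ true) * (χ false * B)
      = σ (χ true) * (χ false * (B * χ false * χ true)) := by
        rw [mul_assoc, crossing_false_mul_crossing_true, mul_one]
    _ = σ (χ true) * (χ false * (σ (χ false) * χ false)) * (σ B * χ true) := by
        rw [B_mul_crossing]; simp only [mul_assoc]
    _ = σ (χ true) * (σ (χ false) * (χ false * σ (χ false))) * (σ B * χ true) := by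
        rw [crossing_braid]
    _ = χ false * (σ (χ false) * (σ B * χ true)) := by
        rw [← mul_assoc (σ _) (σ _), ← map_mul, crossing_true_mul_crossing_false, map_one,
          one_mul]; simp only [mul_assoc]

theorem crossing_mul_shift_crossing_mul_crossing :
    χ false * (σ (χ true) * χ true) = σ (χ true) * (χ true * σ (χ false) : M) :=
  calc χ false * (σ (χ true) * χ true)
      = χ false * (σ (χ true) * (χ true * σ (χ true))) * σ (χ false) := by
        simp only [mul_assoc, ← map_mul, crossing_true_mul_crossing_false, map_one, mul_one]
    _ = σ (χ true) * (χ true * σ (χ false)) := by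
        rw [crossing_braid, reassoc crossing_false_mul_crossing_true, one_mul, mul_assoc]

/-! ### Names and right multiplication -/

/-- The name `a• = C⁺ I a` of `a`, of arity `0 → 1`. -/
def bul (a : M) : M := χ true ⬝ 1 ⬝ a

/-- Right composition `C⁺ B x` with `x`. -/
def rmul (x : M) : M := bul x * B

theorem B_mul_crossing_ap (s : Bool) (a : M) : B * χ s ⬝ a = χ s ⬝ (χ s * σ a) := by
  have h := congrArg (· ⬝ a) (shift_B_mul_crossing (M := M) s)
  simp only [mul_ap] at h
  exact h

theorem crossing_ap_ap_mul (s : Bool) (a b y : M) : χ s ⬝ a ⬝ b * y = χ s ⬝ (a * y) ⬝ b := by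
  have h := congrArg (· ⬝ b ⬝ y) (B_mul_crossing_ap s a)
  simp only [crossing_ap_ap_ap, mul_ap] at h
  exact h

theorem bul_mul (s : Bool) (b y : M) : bul b * y = χ s ⬝ y ⬝ b := by
  rw [bul, crossing_ap_ap_eq true s, crossing_ap_ap_mul, one_mul]

theorem mul_bul (x a : M) : x * bul a = bul a * σ x := by
  have h := congrArg (· ⬝ (1 : M) ⬝ a) (shift_shift_mul_crossing true x)
  simp only [mul_ap, shift_ap, mul_one] at h
  rw [bul_mul true, ← h]
  rfl

theorem bul_mul_crossing (s : Bool) (a : M) : bul a * χ s = σ (bul a) := by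
  have h := congrArg (· ⬝ a) (B_mul_crossing_ap s (1 : M))
  simp only [mul_ap, map_one, mul_one] at h
  rw [bul_mul s, ← h, bul, crossing_ap_ap_eq true s]
  rfl

theorem shift_bul_mul_crossing (s : Bool) (a : M) : σ (bul a) * χ s = bul a := by
  rw [← bul_mul_crossing (!s), mul_assoc, crossing_not_mul_crossing, mul_one]

theorem crossing_B_ap (s : Bool) (x : M) : χ s ⬝ B ⬝ x = rmul x := (bul_mul s x B).symm

theorem rmul_apply (x y : M) : rmul x ⬝ y = y * x := by
  rw [← crossing_B_ap true]
  exact crossing_ap_ap_ap true B x y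

theorem bul_ap (a b : M) : bul (a ⬝ b) = bul b * rmul a := by
  have h := congrArg (· ⬝ (1 : M) ⬝ a ⬝ b) (B_mul_crossing (M := M) true)
  simp only [mul_ap, shift_ap, mul_one, crossing_B_ap] at h
  rw [bul_mul true, ← h]
  exact (comp_ap _ _ _).symm

theorem rmul_mul_crossing_ap (s : Bool) (y a : M) : rmul y * χ s ⬝ a = χ s ⬝ (a * y) := by
  rw [rmul, mul_assoc, B_mul_crossing_ap, bul_mul (!s), ← mul_ap, crossing_not_mul_crossing,
    one_ap, mul_ap, shift_ap]

theorem rmul_B : rmul B * (B * B) = σ B * (B : M) := by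
  rw [← crossing_B_ap true]
  exact ExtAlgebra.isExt.hAlpha

theorem rmul_crossing (s : Bool) : rmul (χ s) * (B * B) = σ (χ s) * (B * B : M) := by
  rw [← crossing_B_ap true]
  cases s
  · exact ExtAlgebra.isExt.hCox2m
  · exact ExtAlgebra.isExt.hCox2p

theorem shift_shift_mul_B (y : M) : σ (σ y) * B = B * σ y := by
  have h := congrArg (· ⬝ y) (rmul_B (M := M))
  simp only [mul_ap, rmul_apply] at h
  exact h

theorem rmul_one : rmul (1 : M) = 1 := by
  rw [← crossing_B_ap true]
  exact ExtAlgebra.isExt.hRho.trans ExtAlgebra.isExt.hLam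

theorem rmul_mul (a b : M) : rmul (a * b) = rmul b * rmul a :=
  calc rmul (a * b) = bul (B ⬝ a ⬝ b) * B := rfl
    _ = bul b * (bul a * (rmul B * (B * B))) := by simp only [bul_ap, rmul, mul_assoc]
    _ = bul b * (bul a * σ B * B) := by rw [rmul_B, mul_assoc]
    _ = rmul b * rmul a := by rw [← mul_bul]; simp only [rmul, mul_assoc]

theorem shift_mul_rmul (x y : M) : σ y * rmul x = rmul x * σ y := by
  rw [rmul, ← mul_assoc, mul_bul, mul_assoc, shift_shift_mul_B, mul_assoc]

theorem rmul_shift (x : M) : rmul (σ x) * B = B * rmul x :=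
  calc rmul (σ x) * B = bul (B ⬝ x) * B * B := rfl
    _ = bul x * (rmul B * (B * B)) := by simp only [bul_ap, mul_assoc]
    _ = B * rmul x := by rw [rmul_B, ← mul_assoc, ← mul_bul, rmul, mul_assoc]

theorem rmul_bul (a : M) : rmul (bul a) = σ (bul a) * B :=
  calc rmul (bul a) = bul (χ true ⬝ 1 ⬝ a) * B := rfl
    _ = bul a * (bul 1 * (rmul (χ true) * (B * B))) := by
      simp only [bul_ap, rmul, mul_assoc]
    _ = bul a * (χ true * (rmul 1 * B)) := by
      rw [rmul_crossing, reassoc (mul_bul _ _).symm, rmul]; simp only [mul_assoc]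
    _ = σ (bul a) * B := by rw [rmul_one, one_mul, ← mul_assoc, bul_mul_crossing]

/-! ### Arities -/

/-- `f` is a diagram with `m` inputs and `n` outputs; this is `BCStruct.hasArity`. -/
def HasArity (f : M) (m n : ℕ) : Prop := rmul f * B ^ m = σ f * B ^ n

namespace HasArity

variable {f g : M} {m n p : ℕ}

protected theorem mul (hf : HasArity f m n) (hg : HasArity g n p) : HasArity (f * g) m p := by
  unfold HasArity at *
  rw [rmul_mul, mul_assoc, hf, ← mul_assoc, ← shift_mul_rmul, mul_assoc, hg, map_mul, mul_assoc]

protected theorem shift (hf : HasArity f m n) : HasArity (σ f) (m + 1) (n + 1) := by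
  unfold HasArity at *
  rw [pow_succ', pow_succ', ← mul_assoc, rmul_shift, mul_assoc, hf, ← mul_assoc,
    ← shift_shift_mul_B, mul_assoc]

theorem add_one (hf : HasArity f m n) : HasArity f (m + 1) (n + 1) := by
  unfold HasArity at *
  rw [pow_succ, pow_succ, ← mul_assoc, hf, mul_assoc]

theorem iterate_shift_mul (hf : HasArity f m n) (x : M) : σ^[m] x * f = f * σ^[n] x := by
  have pow_ap (k : ℕ) (x : M) : B ^ k ⬝ x = σ^[k] x := by
    induction k generalizing x with
    | zero => exact one_ap x
    | succ k ih => rw [pow_succ, mul_ap, ih]; rfl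
  have h := congrArg (· ⬝ x) hf
  simpa only [mul_ap, rmul_apply, shift_ap, pow_ap] using h

theorem eq_bul_mul (hf : HasArity f m 1) : f = bul (f ⬝ 1) * B ^ m := by
  have hf' : rmul f * B ^ m = σ f * B := by rw [hf, pow_one]
  calc f = bul 1 * σ f * B := by rw [← mul_bul, mul_assoc, ← rmul, rmul_one, mul_one]
    _ = bul (f ⬝ 1) * B ^ m := by rw [bul_ap, mul_assoc, mul_assoc, hf']

theorem eq_of_mul_B_eq (hf : HasArity f m 1) (hg : HasArity g m 1) (h : f * B = g * B) :
    f = g := by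
  have hB : B ⬝ (1 : M) = 1 := map_one σ
  have h1 := congrArg (· ⬝ (1 : M)) h
  simp only [mul_ap, hB] at h1
  rw [hf.eq_bul_mul, hg.eq_bul_mul, h1]

end HasArity

theorem hasArity_one (m : ℕ) : HasArity (1 : M) m m := by
  rw [HasArity, rmul_one, map_one]

theorem hasArity_bul (a : M) : HasArity (bul a) 0 1 := by
  rw [HasArity, rmul_bul, pow_zero, mul_one, pow_one]

theorem hasArity_B : HasArity (B : M) 2 1 := by
  rw [HasArity, pow_two, pow_one, rmul_B]

theorem hasArity_crossing (s : Bool) : HasArity (χ s : M) 2 2 := by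
  rw [HasArity, pow_two, rmul_crossing]

/-- The first strand crossing over (or under) the next `m` strands. -/
def crossingPast (s : Bool) : ℕ → M
  | 0 => 1
  | m + 1 => χ s * σ (crossingPast s m)

theorem rmul_crossingPast (s : Bool) (m : ℕ) :
    rmul (crossingPast s m) * χ s ⬝ 1 = B ^ m * χ s ⬝ (1 : M) := by
  induction m with
  | zero => rw [crossingPast, rmul_one, pow_zero]
  | succ m ih =>
    have h : rmul (χ s) * χ s ⬝ 1 = B * χ s ⬝ (1 : M) := by
      rw [rmul_mul_crossing_ap, one_mul, B_mul_crossing_ap, map_one, mul_one]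
    rw [crossingPast, rmul_mul, mul_assoc, h, ← mul_assoc, rmul_shift, mul_assoc, ih, pow_succ',
      mul_assoc]

theorem HasArity.crossingPast_mul {f : M} {m n : ℕ} (hf : HasArity f m n) (s : Bool) :
    crossingPast s m * f = σ f * crossingPast s n := by
  set k : M := χ s ⬝ 1
  have ap_eq (x : M) : χ s ⬝ x = rmul x * k := by rw [rmul_mul_crossing_ap, one_mul]
  have shift_mul_k : σ f * k = rmul (σ f) * k := by
    have h := congrArg (· ⬝ (1 : M)) (shift_shift_mul_crossing s f)
    simp only [mul_ap, shift_ap, mul_one] at h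
    exact h.trans (ap_eq (σ f))
  apply crossing_ap_injective s
  calc χ s ⬝ (crossingPast s m * f) = rmul f * (rmul (crossingPast s m) * k) := by
        rw [ap_eq, rmul_mul, mul_assoc]
    _ = σ f * (B ^ n * k) := by rw [rmul_crossingPast, reassoc hf, mul_assoc]
    _ = rmul (crossingPast s n) * (σ f * k) := by
        rw [← rmul_crossingPast, reassoc (shift_mul_rmul _ _), mul_assoc]
    _ = χ s ⬝ (σ f * crossingPast s n) := by rw [shift_mul_k, ap_eq, rmul_mul, mul_assoc]

theorem rmul_mul_crossing (s : Bool) (x : M) : rmul x * χ s = χ s * σ (rmul x) :=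
  calc rmul x * χ s = bul x * σ (χ s) * (χ s * σ B) := by
        rw [rmul, mul_assoc, B_mul_crossing, mul_assoc]
    _ = χ s * σ (rmul x) := by
        rw [← mul_bul, mul_assoc, reassoc (bul_mul_crossing s x), rmul, map_mul]

theorem shift_rmul_mul_crossing (s : Bool) (x : M) : σ (rmul x) * χ s = χ s * rmul x :=
  calc σ (rmul x) * χ s = χ s * (χ (!s) * σ (rmul x)) * χ s := by
        rw [reassoc (crossing_mul_crossing_not s), one_mul]
    _ = χ s * rmul x := by
        rw [← rmul_mul_crossing, mul_assoc, mul_assoc, crossing_not_mul_crossing, mul_one]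

theorem HasArity.crossing_mul_shift_crossing_mul {f : M} (hf : HasArity f 2 0) (s : Bool) :
    χ s * (σ (χ s) * f) = σ f := by
  simpa only [crossingPast, map_one, mul_one, mul_assoc] using hf.crossingPast_mul s

theorem HasArity.shift_crossing_mul_crossing_mul {f : M} (hf : HasArity f 2 0) (s : Bool) :
    σ (χ s) * (χ s * σ f) = f := by
  rw [← hf.crossing_mul_shift_crossing_mul (!s), reassoc (crossing_mul_crossing_not s), one_mul,
    ← mul_assoc, ← map_mul, crossing_mul_crossing_not, map_one, one_mul]

theorem HasArity.shift_mul_crossing_mul_shift_crossing {f : M} (hf : HasArity f 0 2) (s : Bool) :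
    σ f * (χ s * σ (χ s)) = f := by
  simpa only [crossingPast, map_one, mul_one, one_mul] using (hf.crossingPast_mul s).symm

theorem HasArity.mul_shift_crossing_mul_crossing {f : M} (hf : HasArity f 0 2) (s : Bool) :
    f * (σ (χ s) * χ s) = σ f := by
  calc f * (σ (χ s) * χ s) = σ f * (χ (!s) * (σ (χ (!s)) * (σ (χ s) * χ s))) := by
        nth_rw 1 [← hf.shift_mul_crossing_mul_shift_crossing (!s)]
        simp only [mul_assoc]
    _ = σ f := by
        rw [← mul_assoc (σ _) (σ _), ← map_mul, crossing_not_mul_crossing, map_one, one_mul,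
          crossing_not_mul_crossing, mul_one]

/-! ### Duality -/

/-- The first strand is self-dual with unit `α : 0 → 2` and counit `β : 2 → 0`. -/
structure IsDual (α β : M) : Prop where
  hasArity_unit : HasArity α 0 2
  hasArity_counit : HasArity β 2 0
  unit_mul_shift_counit : α * σ β = 1
  shift_unit_mul_counit : σ α * β = 1

theorem IsDual.mul_eq_iff {α β x : M} (h : IsDual α β) (hx : HasArity x 1 1) :
    α * x = α * σ x ↔ x * β = σ x * β := by
  have hα (y : M) : y * α = α * σ (σ y) := h.hasArity_unit.iterate_shift_mul y
  have hβ (y : M) : σ (σ y) * β = β * y := h.hasArity_counit.iterate_shift_mul y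
  have hx (y : M) : σ y * x = x * σ y := hx.iterate_shift_mul y
  have shift_zigzag : σ (α * σ β) = 1 := by rw [h.unit_mul_shift_counit, map_one]
  constructor
  · intro heq
    calc x * β = σ α * (β * (x * β)) := by rw [reassoc h.shift_unit_mul_counit, one_mul]
      _ = σ (α * σ x) * (σ (σ β) * β) := by
          rw [← hβ]; simp only [map_mul, mul_assoc]
      _ = σ α * (σ (x * σ β) * β) := by rw [← heq]; simp only [map_mul, mul_assoc]
      _ = σ (α * σ β) * (σ x * β) := by rw [← hx]; simp only [map_mul, mul_assoc]
      _ = σ x * β := by rw [shift_zigzag, one_mul]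
  · intro heq
    calc α * x = α * (x * α) * σ β := by
          rw [mul_assoc, mul_assoc, h.unit_mul_shift_counit, mul_one]
      _ = α * α * σ (σ x * β) := by rw [hα]; simp only [map_mul, mul_assoc]
      _ = α * (σ (σ α * x) * σ β) := by rw [← heq, hα]; simp only [map_mul, mul_assoc]
      _ = α * σ x * σ (σ α * β) := by rw [hx]; simp only [map_mul, mul_assoc]
      _ = α * σ x := by rw [h.shift_unit_mul_counit, map_one, mul_one]

theorem pow_eq (a : M) (n : ℕ) : ExtAlgebra.toBCStruct.pow a n = a ^ n := by
  induction n with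
  | zero => rfl
  | succ n ih => rw [pow_succ', BCStruct.pow, ih]; rfl

theorem hasArity_zero_two_iff {α : M} : HasArity α 0 2 ↔ bul α * B = σ α * B ^ 2 := by
  rw [HasArity, pow_zero, mul_one, rmul]

theorem hasArity_two_zero_iff {β : M} : HasArity β 2 0 ↔ bul β * B ^ 3 = σ β := by
  rw [HasArity, pow_zero, mul_one, rmul, mul_assoc, ← pow_succ']

theorem isDuality_iff {α β : M} : ExtAlgebra.toBCStruct.IsDuality α β ↔ IsDual α β := by
  have B_one : ExtAlgebra.toBCStruct.ap B ExtAlgebra.toBCStruct.I = (1 : M) := map_one σ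
  constructor
  · intro h
    have arAl := h.arAl
    have arBe := h.arBe
    rw [pow_eq] at arAl arBe
    exact ⟨hasArity_zero_two_iff.2 arAl, hasArity_two_zero_iff.2 arBe, h.d1.trans B_one,
      h.d2.trans B_one⟩
  · intro h
    have arAl := hasArity_zero_two_iff.1 h.hasArity_unit
    have arBe := hasArity_two_zero_iff.1 h.hasArity_counit
    rw [← pow_eq] at arAl arBe
    exact ⟨arAl, arBe, h.unit_mul_shift_counit.trans B_one.symm,
      h.shift_unit_mul_counit.trans B_one.symm⟩

/-! ### Closing a strand -/

/-- The combinator closing the first strand of a diagram with a cap `α` and a cup `κ`. -/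
def strandClosure (α κ : M) : M := σ α * (rmul κ * B)

theorem strandClosure_ap (α κ a : M) : strandClosure α κ ⬝ a = α * (σ a * κ) := by
  rw [strandClosure, mul_ap, shift_ap, mul_ap, rmul_apply]
  rfl

theorem hasArity_strandClosure {α : M} (hα : HasArity α 0 2) (κ : M) :
    HasArity (strandClosure α κ) 1 2 := by
  rw [strandClosure, rmul, mul_assoc]
  exact hα.shift.mul ((hasArity_bul κ).add_one.add_one.add_one.mul
    (hasArity_B.add_one.add_one.mul hasArity_B.add_one))

theorem strandClosure_right_tightening (α : M) {κ : M} (hκ : HasArity κ 2 0) :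
    σ (strandClosure α κ) * (rmul B * B) = B * strandClosure α κ := by
  have shift_κ : σ κ = bul κ * (B * (B * B)) := by
    rw [← mul_one (σ κ), ← pow_zero B, ← hκ, pow_two, rmul, mul_assoc]
  have slide : B * (rmul κ * B) = σ (rmul κ) * (σ B * (rmul B * B)) :=
    calc B * (rmul κ * B) = rmul (σ κ) * (B * B) := by rw [reassoc (rmul_shift κ), mul_assoc]
      _ = σ (bul κ) * (rmul B * (rmul B * (rmul B * (B * (B * B))))) := by
          rw [shift_κ, rmul_mul, rmul_mul, rmul_mul, rmul_bul]
          simp only [mul_assoc, reassoc (shift_mul_rmul B _).symm]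
      _ = σ (bul κ) * (σ B * (rmul B * (rmul B * (B * B)))) := by
          rw [reassoc₃ rmul_B]
          simp only [mul_assoc, reassoc (shift_mul_rmul B _).symm]
      _ = σ (bul κ) * (σ B * (σ B * (rmul B * B))) := by
          rw [rmul_B, reassoc (shift_mul_rmul B _).symm, mul_assoc]
      _ = σ (rmul κ) * (σ B * (rmul B * B)) := by
          rw [show rmul κ = bul κ * B from rfl, map_mul, mul_assoc]
  rw [strandClosure, map_mul, map_mul, mul_assoc, mul_assoc, ← slide, reassoc (shift_shift_mul_B _),
    mul_assoc]

theorem HasArity.mul_shift_mul_shift_shift_crossing {α : M} (hα : HasArity α 0 2) (s : Bool) :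
    α * (σ α * σ (σ (χ s))) = α * (σ α * χ s) :=
  calc α * (σ α * σ (σ (χ s)))
      = α * σ (σ α * (χ (!s) * σ (χ (!s))) * σ (χ s)) := by
        rw [hα.shift_mul_crossing_mul_shift_crossing, map_mul]
    _ = α * (σ (σ α) * σ (χ (!s))) := by
        rw [mul_assoc, mul_assoc, ← map_mul, crossing_not_mul_crossing, map_one, mul_one, map_mul]
    _ = α * (α * σ (χ (!s))) := by
        rw [← mul_assoc, ← mul_assoc]
        exact congrArg (· * _) (hα.iterate_shift_mul α).symm
    _ = α * (σ α * χ s) := by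
        rw [← hα.mul_shift_crossing_mul_crossing (!s), mul_assoc, mul_assoc,
          crossing_not_mul_crossing, mul_one]

theorem HasArity.crossing_mul_shift_shift_crossing_mul {κ : M} (hκ : HasArity κ 2 0) (s : Bool) :
    χ s * (σ (σ (χ (!s))) * (σ κ * κ)) = σ κ * κ :=
  calc χ s * (σ (σ (χ (!s))) * (σ κ * κ)) = σ (σ (χ (!s))) * (χ s * (σ κ * κ)) := by
        rw [reassoc (shift_shift_mul_crossing s _).symm, mul_assoc]
    _ = σ (σ (χ (!s))) * (σ (χ (!s)) * (κ * κ)) := by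
        rw [← hκ.crossing_mul_shift_crossing_mul (!s), mul_assoc, mul_assoc,
          reassoc (crossing_mul_crossing_not s), one_mul]
    _ = σ (σ (χ (!s)) * (χ (!s) * σ κ)) * κ := by
        rw [show κ * κ = σ (σ κ) * κ from (hκ.iterate_shift_mul κ).symm]
        simp only [map_mul, mul_assoc]
    _ = σ κ * κ := by rw [hκ.shift_crossing_mul_crossing_mul]

theorem strandClosure_mul_strandClosure (α κ : M) :
    strandClosure α κ * strandClosure α κ = σ (α * σ α) * (rmul (σ κ * κ) * (B * B)) :=
  calc strandClosure α κ * strandClosure α κ = σ α * (rmul κ * (B * σ α) * (rmul κ * B)) := by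
        simp only [strandClosure, mul_assoc]
    _ = σ α * (rmul κ * σ (σ α) * (B * rmul κ) * B) := by
        rw [← shift_shift_mul_B]; simp only [mul_assoc]
    _ = σ (α * σ α) * (rmul (σ κ * κ) * (B * B)) := by
        rw [← shift_mul_rmul, ← rmul_shift, rmul_mul]; simp only [map_mul, mul_assoc]

theorem strandClosure_exchange {α κ : M} (hα : HasArity α 0 2) (hκ : HasArity κ 2 0) :
    strandClosure α κ * strandClosure α κ * rmul (χ false) * σ (χ true) =
      strandClosure α κ * strandClosure α κ := by
  have B_mul_B_mul_rmul (x : M) : B * (B * rmul x) = rmul (σ (σ x)) * (B * B) := by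
    rw [← rmul_shift, ← mul_assoc, ← rmul_shift, mul_assoc]
  have B_mul_B_mul_shift (x : M) : B * (B * σ x) = σ (σ (σ x)) * (B * B) := by
    rw [← shift_shift_mul_B, ← mul_assoc, ← shift_shift_mul_B, mul_assoc]
  have caps : σ (α * σ α) * σ (σ (σ (χ true))) = σ (α * σ α) * σ (χ true) := by
    rw [← map_mul, ← map_mul, mul_assoc, mul_assoc, hα.mul_shift_mul_shift_shift_crossing]
  have cups : χ true * (σ (σ (χ false)) * (σ κ * κ)) = σ κ * κ :=
    hκ.crossing_mul_shift_shift_crossing_mul true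
  calc strandClosure α κ * strandClosure α κ * rmul (χ false) * σ (χ true)
      = σ (α * σ α) * (rmul (σ κ * κ) * (B * (B * rmul (χ false)) * σ (χ true))) := by
        rw [strandClosure_mul_strandClosure]; simp only [mul_assoc]
    _ = σ (α * σ α) * (rmul (σ κ * κ) *
          (rmul (σ (σ (χ false))) * (σ (σ (σ (χ true))) * (B * B)))) := by
        rw [B_mul_B_mul_rmul]; simp only [mul_assoc, B_mul_B_mul_shift]
    _ = σ (α * σ α) * σ (σ (σ (χ true))) *
          (rmul (σ (σ (χ false)) * (σ κ * κ)) * (B * B)) := by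
        rw [mul_assoc, reassoc (shift_mul_rmul _ (σ (σ (χ true)))), mul_assoc,
          reassoc (rmul_mul _ _).symm]
    _ = σ (α * σ α) * (rmul (σ (σ (χ false)) * (σ κ * κ)) * (rmul (χ true) * (B * B))) := by
        rw [caps, mul_assoc, reassoc (shift_mul_rmul _ (χ true)), mul_assoc, ← rmul_crossing]
    _ = σ (α * σ α) * (rmul (σ κ * κ) * (B * B)) := by
        rw [← mul_assoc (rmul _) (rmul _), ← rmul_mul, cups]
    _ = strandClosure α κ * strandClosure α κ := (strandClosure_mul_strandClosure α κ).symm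

/-! ### The trace form -/

/-- The cap `0 → 2` underlying a trace combinator. -/
def traceCap (Tr : M) : M := bul 1 * Tr

/-- The diagram `2 → 1` which applies the constant `χ s` to its two inputs. -/
def crossingNode (s : Bool) : M := bul (χ s) * (B * B)

theorem hasArity_crossingNode (s : Bool) : HasArity (crossingNode s : M) 2 1 :=
  (hasArity_bul _).add_one.add_one.mul (hasArity_B.add_one.mul hasArity_B)

theorem crossingNode_mul_B (s : Bool) : crossingNode s * B = σ (χ s) * (B * B : M) := by
  rw [← rmul_crossing, crossingNode, rmul]
  simp only [mul_assoc]

theorem shift_shift_mul_crossingNode (s : Bool) (y : M) :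
    σ (σ y) * crossingNode s = crossingNode s * σ y :=
  (hasArity_crossingNode s).iterate_shift_mul y

theorem shift_crossingNode_mul_crossing (s s' : Bool) :
    σ (crossingNode s) * χ s' = χ s' * (σ (χ s') * crossingNode s : M) := by
  have h := (hasArity_crossingNode (M := M) s).crossingPast_mul s'
  simpa only [crossingPast, map_one, mul_one, mul_assoc] using h.symm

theorem shift_shift_crossingNode_mul :
    σ (σ (crossingNode true)) * (χ false * (σ (χ false) * (σ B * B))) =
    χ false * (σ (χ false) * (σ B * (σ B * B)) : M) :=
  calc σ (σ (crossingNode true)) * (χ false * (σ (χ false) * (σ B * B)))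
      = χ false * (σ (σ (crossingNode true) * χ false) * (σ B * B)) := by
        rw [reassoc (shift_shift_mul_crossing false _)]; simp only [map_mul, mul_assoc]
    _ = χ false * (σ (χ false) * (σ (σ (χ false)) * (σ (crossingNode true * B) * B))) := by
        rw [shift_crossingNode_mul_crossing]; simp only [map_mul, mul_assoc]
    _ = χ false * (σ (χ false) * (σ (σ (χ false * χ true)) * (σ B * (σ B * B)))) := by
        rw [crossingNode_mul_B]; simp only [map_mul, mul_assoc]
    _ = _ := by rw [crossing_false_mul_crossing_true, map_one, map_one, one_mul]

/-- The pairing `2 → 0` sending `x` and `y` to the trace of `x ∘ y`. -/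
def tracePairing (Tr : M) : M := Tr ⬝ (χ false * (σ (χ false) * (σ B * B)))

/-- The adjoint `1 → 2` of composition with respect to `tracePairing Tr`. -/
def traceSplit (Tr : M) : M := traceCap Tr * (σ (χ false) * crossingNode true)

end Combinators

/-! ### Twists -/

/-- A balanced extensional BC±I-algebra, bundled on its carrier. -/
class BalancedAlgebra (M : Type*) extends ExtAlgebra M where
  twistPos : M
  twistNeg : M
  isBalanced : toBCStruct.IsBalanced twistPos twistNeg

/-- The two twists of the first strand: `twist true = θ⁺` and `twist false = θ⁻`. -/
def twist [BalancedAlgebra M] : Bool → M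
  | true => BalancedAlgebra.twistPos
  | false => BalancedAlgebra.twistNeg

local notation "θ" => twist

section Twists

variable [BalancedAlgebra M]

theorem hasArity_twist (s : Bool) : HasArity (θ s : M) 1 1 := by
  rw [HasArity, pow_one, ← crossing_B_ap true]
  cases s
  · exact BalancedAlgebra.isBalanced.arM.symm
  · exact BalancedAlgebra.isBalanced.arP.symm

theorem twist_mul_twist_not (s : Bool) : θ s * θ (!s) = (1 : M) := by
  cases s
  · exact BalancedAlgebra.isBalanced.invMP.trans (map_one σ)
  · exact BalancedAlgebra.isBalanced.invPM.trans (map_one σ)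

theorem twist_not_mul_twist (s : Bool) : θ (!s) * θ s = (1 : M) := by
  simpa only [Bool.not_not] using twist_mul_twist_not (M := M) (!s)

theorem twist_false_mul_twist_true : θ false * θ true = (1 : M) :=
  twist_mul_twist_not false

theorem twist_true_mul_twist_false : θ true * θ false = (1 : M) :=
  twist_mul_twist_not true

theorem bul_mul_twist (s : Bool) (a : M) : bul a * θ s = bul a := by
  rw [bul_mul true]
  cases s
  · exact BalancedAlgebra.isBalanced.natBulM a
  · exact BalancedAlgebra.isBalanced.natBulP a

theorem B_mul_twist (s : Bool) : B * θ s = θ s * (χ s * (θ s * (χ s * B)) : M) := by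
  cases s
  · exact BalancedAlgebra.isBalanced.natBM
  · exact BalancedAlgebra.isBalanced.natBP

theorem shift_mul_twist (s : Bool) (y : M) : σ y * θ s = θ s * σ y :=
  (hasArity_twist s).iterate_shift_mul y

theorem crossing_mul_twist (s s' : Bool) : χ s * θ s' = σ (θ s') * (χ s : M) := by
  simpa only [crossingPast, map_one, mul_one] using (hasArity_twist (M := M) s').crossingPast_mul s

theorem crossing_mul_shift_twist (s s' : Bool) : χ s * σ (θ s') = θ s' * (χ s : M) :=
  calc (χ s : M) * σ (θ s') = χ s * (σ (θ s') * χ (!s)) * χ s := by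
        rw [mul_assoc, mul_assoc, crossing_not_mul_crossing, mul_one]
    _ = θ s' * χ s := by
        rw [← crossing_mul_twist, reassoc (crossing_mul_crossing_not s), one_mul]

theorem rmul_mul_twist (s : Bool) (x : M) : rmul x * θ s = θ s * rmul x :=
  calc rmul x * θ s = bul x * (χ s * (θ s * (χ s * B))) := by
        rw [rmul, mul_assoc, B_mul_twist, reassoc (bul_mul_twist s x)]
    _ = θ s * (σ (bul x) * (χ s * B)) := by
        rw [reassoc (bul_mul_crossing s x), reassoc (shift_mul_twist s _), mul_assoc]
    _ = θ s * rmul x := by rw [reassoc (shift_bul_mul_crossing s x), rmul]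

theorem B_mul_B_mul_twist (s : Bool) :
    B * (B * θ s) = θ s * (σ (θ s) * (χ s * (χ s * (σ (σ (θ s)) *
      (σ (χ s) * (χ s * (χ s * (σ (χ s) * (B * B)))))))) : M) := by
  have B_mul_full_twist : B * (χ s * χ s) = σ (χ s) * (χ s * (χ s * (σ (χ s) * (B : M)))) := by
    rw [reassoc (B_mul_crossing s), mul_assoc, mul_assoc, shift_B_mul_crossing]
  have B_mul_twist' : B * θ s = θ s * (σ (θ s) * (χ s * (χ s * B)) : M) := by
    rw [B_mul_twist, reassoc (crossing_mul_twist s s), mul_assoc]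
  calc B * (B * θ s) = θ s * (σ (θ s) * (χ s * (χ s * (B * (σ (θ s) * (χ s * χ s * B)))))) := by
        rw [B_mul_twist', reassoc B_mul_twist']; simp only [mul_assoc]
    _ = θ s * (σ (θ s) * (χ s * (χ s * (σ (σ (θ s)) * (B * (χ s * χ s) * B))))) := by
        rw [← mul_assoc B, ← shift_shift_mul_B]; simp only [mul_assoc]
    _ = _ := by rw [B_mul_full_twist]; simp only [mul_assoc]

/-- A full twist of all inputs slides through `f` to its outputs, of which there are none. -/
theorem HasArity.full_twist_mul {f : M} (hf : HasArity f 2 0) (s : Bool) :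
    θ s * (σ (θ s) * (χ s * (χ s * f))) = f := by
  have hfB : σ f = rmul f * (B * B) := by
    rw [← pow_two, hf, pow_zero, mul_one]
  have slide : σ f * θ s = θ s * (σ (θ s) * (χ s * (χ s * (σ (σ (θ s)) *
      (σ (χ s) * (χ s * (χ s * (σ (χ s) * σ f)))))))) := by
    rw [hfB, mul_assoc, mul_assoc, B_mul_B_mul_twist]
    simp only [reassoc (rmul_mul_twist _ _), reassoc (shift_mul_rmul _ _).symm,
      reassoc (rmul_mul_crossing _ _), reassoc (shift_rmul_mul_crossing _ _), mul_assoc]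
  have three_strands : χ s * (χ s * (σ (χ s) * (χ s * (χ s * (σ (χ s) * σ f))))) =
      σ (χ s) * (σ (χ s) * σ f) := by
    have h := congrArg (· * σ f) (full_twist_of_braid (crossing_braid (M := M) s))
    simp only [mul_assoc] at h
    rw [h, hf.shift_crossing_mul_crossing_mul, hf.crossing_mul_shift_crossing_mul]
  apply shift_injective
  calc σ (θ s * (σ (θ s) * (χ s * (χ s * f))))
      = σ (θ s) * (σ (σ (θ s)) * (σ (χ s) * (σ (χ s) * σ f))) := by simp only [map_mul]
    _ = σ (θ s) * (χ s * (χ s * (σ (σ (θ s)) *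
          (σ (χ s) * (χ s * (χ s * (σ (χ s) * σ f))))))) := by
        rw [← three_strands]
        simp only [reassoc (shift_shift_mul_crossing s _), mul_assoc]
    _ = θ (!s) * (σ f * θ s) := by rw [slide, reassoc (twist_not_mul_twist s), one_mul]
    _ = σ f := by rw [shift_mul_twist, reassoc (twist_not_mul_twist s), one_mul]

theorem HasArity.crossing_mul_crossing_mul_twist_mul {f : M} (hf : HasArity f 2 0) (s : Bool) :
    χ s * (χ s * (θ s * f)) = σ (θ (!s)) * f := by
  have h : χ s * (χ s * (θ s * f)) = θ s * (χ s * (χ s * f)) := by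
    rw [reassoc (crossing_mul_twist s s), mul_assoc, reassoc (crossing_mul_shift_twist s s),
      mul_assoc]
  have absorb : σ (θ s) * (θ s * (χ s * (χ s * f))) = f := by
    rw [reassoc (shift_mul_twist s _), mul_assoc, hf.full_twist_mul]
  rw [h, ← one_mul (θ s * _), ← map_one σ, ← twist_not_mul_twist s, map_mul, mul_assoc, absorb]

theorem HasArity.twist_mul_eq_iff {f : M} (hf : HasArity f 2 0) (s : Bool) :
    θ s * f = σ (θ s) * f ↔ χ s * (θ s * f) = χ (!s) * (θ (!s) * f) := by
  have h := hf.crossing_mul_crossing_mul_twist_mul (!s)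
  rw [Bool.not_not] at h
  rw [← h]
  constructor
  · intro heq
    rw [heq, reassoc (crossing_mul_crossing_not s), one_mul]
  · intro heq
    rw [← heq, reassoc (crossing_not_mul_crossing s), one_mul]

/-! ### From a duality to a trace -/

/-- A trace combinator, without the exchange axiom. -/
structure IsPretrace (Tr : M) : Prop where
  hasArity : HasArity Tr 1 2
  right_tightening : σ Tr * (rmul B * B) = B * Tr
  yanking (s : Bool) : Tr ⬝ χ s = θ s

theorem IsDual.strandClosure_ap_crossing {α β : M} (h : IsDual α β) (s : Bool) :
    strandClosure α (χ s * (θ s * β)) ⬝ χ s = θ s :=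
  calc strandClosure α (χ s * (θ s * β)) ⬝ χ s = α * (σ (χ s) * χ s) * (θ s * β) := by
        rw [strandClosure_ap]; simp only [mul_assoc]
    _ = θ s * (σ α * β) := by
        rw [h.hasArity_unit.mul_shift_crossing_mul_crossing, reassoc (shift_mul_twist s α),
          mul_assoc]
    _ = θ s := by rw [h.shift_unit_mul_counit, mul_one]

theorem IsDual.isPretrace_strandClosure {α β : M} (h : IsDual α β)
    (hβ : θ true * β = σ (θ true) * β) : IsPretrace (strandClosure α (χ true * (θ true * β))) where
  hasArity := hasArity_strandClosure h.hasArity_unit _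
  right_tightening := strandClosure_right_tightening α <|
    (hasArity_crossing true).mul ((hasArity_twist true).add_one.mul h.hasArity_counit)
  yanking
    | true => h.strandClosure_ap_crossing true
    | false => by
      rw [(h.hasArity_counit.twist_mul_eq_iff true).1 hβ]
      exact h.strandClosure_ap_crossing false

/-! ### From a trace to a duality -/

/-- The copairing `0 → 2` inverse to `tracePairing Tr`. -/
def traceCopairing (Tr : M) : M :=
  traceCap Tr * (σ (traceCap Tr * (χ true * θ true)) *
    (crossingNode true * σ (crossingNode false)))

namespace IsPretrace

variable {Tr : M} (h : IsPretrace Tr)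

include h

theorem ap_shift_mul (x a : M) : Tr ⬝ (σ x * a) = x * (Tr ⬝ a) := by
  have slide : σ x * Tr = Tr * σ (σ x) := h.hasArity.iterate_shift_mul x
  calc Tr ⬝ (σ x * a) = (Tr * σ (σ x)) ⬝ a := by rw [mul_ap, shift_ap]
    _ = x * (Tr ⬝ a) := by rw [← slide, mul_ap, shift_ap]

theorem mul_shift_mul_B (a : M) : Tr * (σ a * B) = σ (Tr ⬝ a) := by
  have ha := congrArg (· ⬝ a) h.right_tightening
  simp only [mul_ap, rmul_apply, shift_ap] at ha
  exact ha

theorem ap_mul_shift (a x : M) : Tr ⬝ (a * σ x) = (Tr ⬝ a) * x := by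
  rw [← shift_ap (Tr ⬝ a), ← h.mul_shift_mul_B]
  simp only [mul_ap, shift_ap]
  rfl

theorem rmul_ap (a : M) : rmul (Tr ⬝ a) = Tr * (rmul a * B) := by
  have har := h.hasArity
  rw [HasArity, pow_one, pow_two] at har
  rw [rmul, bul_ap, mul_assoc, har, ← mul_assoc, ← mul_bul, rmul, mul_assoc, mul_assoc]

theorem hasArity_ap {f : M} {m n : ℕ} (hf : HasArity f (m + 1) (n + 1)) :
    HasArity (Tr ⬝ f) m n := by
  rw [HasArity, pow_succ', pow_succ', ← mul_assoc, ← mul_assoc] at hf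
  rw [HasArity, h.rmul_ap, mul_assoc, hf, ← mul_assoc, h.mul_shift_mul_B]

theorem hasArity_traceCap : HasArity (traceCap Tr) 0 2 :=
  (hasArity_bul 1).mul h.hasArity

theorem traceCap_mul (a z : M) : traceCap Tr * (σ a * (B * (B * z))) = (Tr ⬝ a) * z :=
  calc traceCap Tr * (σ a * (B * (B * z))) = bul 1 * (Tr * (σ a * B)) * (B * z) := by
        simp only [traceCap, mul_assoc]
    _ = (Tr ⬝ a) * (rmul 1 * z) := by
        rw [h.mul_shift_mul_B, ← mul_bul, rmul]; simp only [mul_assoc]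
    _ = (Tr ⬝ a) * z := by rw [rmul_one, one_mul]

theorem hasArity_tracePairing : HasArity (tracePairing Tr) 2 0 :=
  h.hasArity_ap <| (hasArity_crossing false).add_one.mul <|
    (hasArity_crossing false).shift.mul <| hasArity_B.shift.mul hasArity_B

theorem hasArity_traceSplit : HasArity (traceSplit Tr) 1 2 :=
  h.hasArity_traceCap.add_one.mul <|
    (hasArity_crossing false).shift.mul (hasArity_crossingNode true).add_one

theorem hasArity_traceCopairing : HasArity (traceCopairing Tr) 0 2 := by
  have inner : HasArity (traceCap Tr * (χ true * θ true)) 0 2 :=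
    h.hasArity_traceCap.mul ((hasArity_crossing true).mul (hasArity_twist true).add_one)
  exact h.hasArity_traceCap.mul <| inner.shift.add_one.mul <|
    (hasArity_crossingNode true).add_one.add_one.mul (hasArity_crossingNode false).shift

theorem shift_traceSplit_mul_tracePairing : σ (traceSplit Tr) * tracePairing Tr = B := by
  have cap_slide : σ (traceCap Tr) * χ false = traceCap Tr * σ (χ true) :=
    calc σ (traceCap Tr) * χ false
        = σ (traceCap Tr) * (χ false * σ (χ false)) * σ (χ true) := by
          rw [mul_assoc, mul_assoc, ← map_mul, crossing_false_mul_crossing_true, map_one, mul_one]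
      _ = _ := by rw [h.hasArity_traceCap.shift_mul_crossing_mul_shift_crossing]
  have cap_eval : σ (σ (traceCap Tr)) * (σ (σ (σ (χ false))) * (χ false * (σ (χ false) *
      (σ B * (σ B * B))))) = χ false * (σ (θ true * χ false) * B) :=
    calc σ (σ (traceCap Tr)) * (σ (σ (σ (χ false))) * (χ false * (σ (χ false) *
          (σ B * (σ B * B)))))
        = χ false * (σ (σ (traceCap Tr) * χ false) * (σ (σ (σ (χ false))) *
            (σ B * (σ B * B)))) := by
          rw [reassoc (shift_shift_mul_crossing false _), mul_assoc,
            ← mul_assoc (σ (σ (σ (χ false)))) (σ (χ false)), ← map_mul,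
            shift_shift_mul_crossing, map_mul, reassoc (shift_shift_mul_crossing false _)]
          simp only [map_mul, mul_assoc]
      _ = χ false * (σ (traceCap Tr * (σ (χ true * σ (χ false)) * (B * (B * 1)))) * B) := by
          rw [cap_slide]; simp only [map_mul, mul_assoc, mul_one]
      _ = χ false * (σ (θ true * χ false) * B) := by
          rw [h.traceCap_mul, h.ap_mul_shift, h.yanking, mul_one]
  calc σ (traceSplit Tr) * tracePairing Tr = Tr ⬝ (χ false * (σ (θ true * χ false) * B)) := by
        rw [tracePairing, ← h.ap_shift_mul, ← cap_eval, ← shift_shift_crossingNode_mul, traceSplit]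
        simp only [map_mul, mul_assoc]
    _ = Tr ⬝ (σ B * (χ false * σ (θ true))) := by
        rw [crossing_mul_shift_twist, reassoc (shift_mul_twist true B), mul_assoc,
          shift_B_mul_crossing, map_mul, mul_assoc, reassoc (crossing_mul_shift_twist _ _),
          mul_assoc]
    _ = B := by
        rw [h.ap_shift_mul, h.ap_mul_shift, h.yanking, twist_false_mul_twist_true, mul_one]

theorem traceCopairing_mul_shift_B : traceCopairing Tr * σ B = traceSplit Tr := by
  have shift_BB : σ (B * B) =
      χ false * (σ (χ false) * (σ (σ (χ false)) * (B * (B * (χ true : M))))) := by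
    have arity_BB : HasArity (B * B : M) 3 1 := hasArity_B.add_one.mul hasArity_B
    have slide := congrArg (· * χ true) (arity_BB.crossingPast_mul false)
    simp only [crossingPast, map_one, mul_one, map_mul, mul_assoc,
      crossing_false_mul_crossing_true] at slide
    rw [slide, map_mul]
  have inner : traceCap Tr * (χ true * (θ true * (σ (σ (χ false)) * σ (B * B)))) = χ false :=
    calc traceCap Tr * (χ true * (θ true * (σ (σ (χ false)) * σ (B * B))))
        = traceCap Tr * (σ (σ (χ false)) * (χ true * (σ (B * B) * θ true))) := by
          rw [reassoc (shift_mul_twist _ _).symm, mul_assoc, ← shift_mul_twist,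
            reassoc (shift_shift_mul_crossing _ _).symm, mul_assoc]
      _ = traceCap Tr * (σ (σ (χ false) * (χ false * σ (χ false))) *
            (B * (B * (χ true * θ true)))) := by
          rw [shift_BB, mul_assoc, reassoc (crossing_true_mul_crossing_false)]
          simp only [map_mul, mul_assoc, one_mul]
      _ = χ false * (θ false * (χ false * (χ true * θ true))) := by
          rw [h.traceCap_mul, h.ap_shift_mul, h.ap_mul_shift, h.yanking]
          simp only [mul_assoc]
      _ = χ false := by
          rw [reassoc (crossing_false_mul_crossing_true), one_mul, twist_false_mul_twist_true,
            mul_one]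
  calc traceCopairing Tr * σ B
      = traceCap Tr * (σ (traceCap Tr * (χ true * θ true)) *
          (crossingNode true * σ (crossingNode false * B))) := by
        simp only [traceCopairing, map_mul, mul_assoc]
    _ = traceCap Tr * (σ (traceCap Tr * (χ true * (θ true * (σ (σ (χ false)) * σ (B * B))))) *
          crossingNode true) := by
        rw [crossingNode_mul_B, ← shift_shift_mul_crossingNode]
        simp only [map_mul, mul_assoc]
    _ = traceSplit Tr := by rw [inner, traceSplit]

theorem shift_traceCopairing_mul_tracePairing :
    σ (traceCopairing Tr) * tracePairing Tr = 1 := by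
  have pairing_slide : σ (σ B) * tracePairing Tr = tracePairing Tr * B :=
    h.hasArity_tracePairing.iterate_shift_mul B
  refine HasArity.eq_of_mul_B_eq (m := 1) ?_ (hasArity_one 1) ?_
  · exact h.hasArity_traceCopairing.shift.mul h.hasArity_tracePairing.add_one
  · rw [mul_assoc, ← pairing_slide, ← mul_assoc, ← map_mul, h.traceCopairing_mul_shift_B,
      h.shift_traceSplit_mul_tracePairing, one_mul]

theorem traceSplit_mul_shift_crossing_mul_B : traceSplit Tr * (σ (χ true) * B) = σ (θ true) :=
  calc traceSplit Tr * (σ (χ true) * B)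
      = traceCap Tr * (σ (χ false) * (crossingNode true * σ (χ true) * B)) := by
        simp only [traceSplit, mul_assoc]
    _ = traceCap Tr * (σ (χ false * (σ (χ true) * χ true)) * (B * (B * 1))) := by
        rw [← shift_shift_mul_crossingNode, mul_assoc, crossingNode_mul_B]
        simp only [map_mul, mul_assoc, mul_one]
    _ = Tr ⬝ (σ (χ true) * (χ true * σ (χ false))) := by
        rw [h.traceCap_mul, mul_one, crossing_mul_shift_crossing_mul_crossing]
    _ = σ (θ true) := by
        rw [h.ap_shift_mul, h.ap_mul_shift, h.yanking, reassoc (crossing_mul_twist _ _),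
          mul_assoc, crossing_true_mul_crossing_false, mul_one]

theorem traceSplit_mul_shift_crossing_mul_tracePairing :
    traceSplit Tr * (σ (χ true) * tracePairing Tr) = θ false * (χ false * (B * θ true)) := by
  have split_slide : σ (traceSplit Tr) * (χ false * σ (χ false)) = χ false * traceSplit Tr := by
    simpa only [crossingPast, map_one, mul_one] using
      (h.hasArity_traceSplit.crossingPast_mul false).symm
  have split_comm (y : M) : traceSplit Tr * σ (σ y) = σ y * traceSplit Tr :=
    (h.hasArity_traceSplit.iterate_shift_mul y).symm
  have diagram : σ (traceSplit Tr) * (σ (σ (χ true)) * (χ false * (σ (χ false) * (σ B * B)))) =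
      χ false * σ (χ false * (B * θ true)) :=
    calc σ (traceSplit Tr) * (σ (σ (χ true)) * (χ false * (σ (χ false) * (σ B * B))))
        = σ (traceSplit Tr) * (χ false * (σ (σ (χ true) * (χ false * B)) * B)) := by
          rw [reassoc (shift_shift_mul_crossing _ _)]; simp only [map_mul, mul_assoc]
      _ = χ false * (traceSplit Tr * σ (σ (χ false * B)) * (σ (χ true) * B)) := by
          rw [shift_crossing_mul_crossing_mul_B]
          simp only [map_mul, mul_assoc, reassoc₃ split_slide]
      _ = χ false * σ (χ false * (B * θ true)) := by
          rw [split_comm, mul_assoc, h.traceSplit_mul_shift_crossing_mul_B]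
          simp only [map_mul, mul_assoc]
  rw [tracePairing, ← h.ap_shift_mul, ← h.ap_shift_mul, diagram, h.ap_mul_shift, h.yanking]

theorem eq_of_shift_mul_tracePairing_eq {f g : M} (hf : HasArity f 1 1) (hg : HasArity g 1 1)
    (heq : σ f * tracePairing Tr = σ g * tracePairing Tr) : f = g := by
  have recover {x : M} (hx : HasArity x 1 1) :
      χ true * (θ true * (traceSplit Tr * (σ (χ true) * (σ x * tracePairing Tr)))) * θ false =
        x * B := by
    have crossing_slide (s : Bool) : χ s * x = σ x * χ s := by
      simpa only [crossingPast, map_one, mul_one] using hx.crossingPast_mul s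
    have split_slide : σ x * traceSplit Tr = traceSplit Tr * σ (σ x) :=
      h.hasArity_traceSplit.iterate_shift_mul x
    calc χ true * (θ true * (traceSplit Tr * (σ (χ true) * (σ x * tracePairing Tr)))) * θ false
        = χ true * (θ true *
            (σ x * (traceSplit Tr * (σ (χ true) * tracePairing Tr)))) * θ false := by
          rw [← mul_assoc (σ (χ true)), ← map_mul, crossing_slide, map_mul,
            mul_assoc (σ (σ x)), reassoc split_slide.symm, mul_assoc (σ x)]
      _ = χ true * (θ true * (θ false * (σ x * χ false))) * (B * (θ true * θ false)) := by
          rw [h.traceSplit_mul_shift_crossing_mul_tracePairing, reassoc (shift_mul_twist _ _)]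
          simp only [mul_assoc]
      _ = x * B := by
          rw [← crossing_slide, reassoc twist_true_mul_twist_false, one_mul,
            reassoc crossing_true_mul_crossing_false, one_mul, twist_true_mul_twist_false, mul_one]
  apply hf.eq_of_mul_B_eq hg
  rw [← recover hf, heq, recover hg]

theorem isDual : IsDual (traceCopairing Tr) (tracePairing Tr) where
  hasArity_unit := h.hasArity_traceCopairing
  hasArity_counit := h.hasArity_tracePairing
  shift_unit_mul_counit := h.shift_traceCopairing_mul_tracePairing
  unit_mul_shift_counit := by
    refine h.eq_of_shift_mul_tracePairing_eq ?_ (hasArity_one 1) ?_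
    · exact h.hasArity_traceCopairing.add_one.mul h.hasArity_tracePairing.shift
    · have pairing_slide : σ (σ (tracePairing Tr)) * tracePairing Tr =
          tracePairing Tr * tracePairing Tr :=
        h.hasArity_tracePairing.iterate_shift_mul _
      rw [map_mul, mul_assoc, pairing_slide, reassoc h.shift_traceCopairing_mul_tracePairing,
        map_one]

theorem twist_mul_tracePairing (s : Bool) :
    θ s * tracePairing Tr = σ (θ s) * tracePairing Tr := by
  have trace_eq (s : Bool) : Tr ⬝ tracePairing Tr = χ s * (θ s * tracePairing Tr) := by
    have straighten := h.hasArity_tracePairing.shift_crossing_mul_crossing_mul s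
    nth_rw 1 [← straighten]
    rw [h.ap_shift_mul, h.ap_mul_shift, h.yanking]
  rw [h.hasArity_tracePairing.twist_mul_eq_iff, ← trace_eq, ← trace_eq]

end IsPretrace

/-! ### The axioms in terms of diagrams -/

theorem isPretrace_iff {Tr : M} : IsPretrace Tr ↔
    (χ true ⬝ B ⬝ Tr) * B = σ Tr * ExtAlgebra.toBCStruct.pow B 2 ∧
      σ Tr * ((χ true ⬝ B ⬝ B) * B) = B * Tr ∧ Tr ⬝ χ true = θ true ∧ Tr ⬝ χ false = θ false := by
  rw [pow_eq, crossing_B_ap, crossing_B_ap]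
  constructor
  · intro h
    have arity := h.hasArity
    rw [HasArity, pow_one] at arity
    exact ⟨arity, h.right_tightening, h.yanking true, h.yanking false⟩
  · rintro ⟨arity, right_tightening, yankP, yankM⟩
    exact ⟨by rwa [HasArity, pow_one], right_tightening, Bool.rec yankM yankP⟩

theorem IsPretrace.isRibbon {Tr : M} (h : IsPretrace Tr) :
    ExtAlgebra.toBCStruct.IsRibbon (θ true) (θ false) (traceCopairing Tr) (tracePairing Tr) :=
  have balanced (s : Bool) :=
    (h.isDual.mul_eq_iff (hasArity_twist s)).2 (h.twist_mul_tracePairing s)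
  ⟨isDuality_iff.2 h.isDual, balanced true, balanced false⟩

theorem isTrace_strandClosure {α β : M}
    (h : ExtAlgebra.toBCStruct.IsRibbon (θ true) (θ false) α β) :
    ExtAlgebra.toBCStruct.IsTrace (θ true) (θ false) (strandClosure α (χ true * (θ true * β))) := by
  have hdual := isDuality_iff.1 h.dual
  have hβ := (hdual.mul_eq_iff (hasArity_twist true)).1 h.dTp
  have hκ := (hasArity_crossing true).mul <|
    (hasArity_twist true).add_one.mul hdual.hasArity_counit
  obtain ⟨leftT, rightT, yankP, yankM⟩ := isPretrace_iff.1 (hdual.isPretrace_strandClosure hβ)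
  have exch := strandClosure_exchange hdual.hasArity_unit hκ
  rw [← crossing_B_ap true] at exch
  exact ⟨leftT, rightT, yankP, yankM, exch⟩

end Twists

end BCAlgebra

open BCAlgebra in
theorem stmt_17_general {α : Type*} (S : Paper.BCStruct α) (hS : S.IsExt)
    {tp tm : α} (hBal : S.IsBalanced tp tm) :
    List.TFAE [
      ∃ Tr : α, S.IsTrace tp tm Tr,
      ∃ Tr : α, S.comp (S.ap (S.ap S.Cp S.B) Tr) S.B = S.comp (S.ap S.B Tr) (S.pow S.B 2) ∧
        S.comp (S.ap S.B Tr) (S.comp (S.ap (S.ap S.Cp S.B) S.B) S.B) = S.comp S.B Tr ∧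
        S.ap Tr S.Cp = tp ∧ S.ap Tr S.Cm = tm,
      ∃ al be : α, S.IsRibbon tp tm al be] := by
  let _ : BalancedAlgebra α :=
    { S with isExt := hS, twistPos := tp, twistNeg := tm, isBalanced := hBal }
  tfae_have 1 → 2 := fun ⟨Tr, h⟩ => ⟨Tr, h.leftT, h.rightT, h.yankP, h.yankM⟩
  tfae_have 2 → 3 := fun ⟨_, h⟩ => ⟨_, _, (isPretrace_iff.2 h).isRibbon⟩
  tfae_have 3 → 1 := fun ⟨_, _, h⟩ => ⟨_, isTrace_strandClosure h⟩
  tfae_finish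

/-- A balanced extensional BC±I-algebra is traced iff it is ribbon. -/
theorem stmt_17 {α : Type*} (S : Paper.BCStruct α) (hS : S.IsExt)
    {tp tm : α} (hBal : S.IsBalanced tp tm) :
    (∃ Tr : α, S.IsTrace tp tm Tr) ↔ (∃ al be : α, S.IsRibbon tp tm al be) :=
  (stmt_17_general S hS hBal).out 0 2
end
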